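/- Let A = (S, s₀, T, O) be a Mealy machine with input set M, output set N, and finite state set S. Then the least set of stream functions M^ω → N^ω containing the output stream !A and closed under functional stream derivatives (for all h in the set and a ∈ M, h_a is in the set) is finite, of cardinality at most the cardinality of S. -/

import Mathlib

/-- Cons a head onto a stream (streams are functions `ℕ → α`). -/
def scons {α : Type*} (a : α) (σ : ℕ → α) : ℕ → α
  | 0 => a
  | n + 1 => σ n

/-- A stream function is causal if its `i`-th output depends only on the first `i+1` inputs. -/
def Causal {M N : Type*} (f : (ℕ → M) → (ℕ → N)) : Prop :=
  ∀ i : ℕ, ∀ σ τ : ℕ → M, (∀ j ≤ i, σ j = τ j) → f σ i = f τ i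

/-- Functional stream derivative of `f` on input `a`. -/
def sderiv {M N : Type*} (f : (ℕ → M) → (ℕ → N)) (a : M) : (ℕ → M) → (ℕ → N) :=
  fun σ i => f (scons a σ) (i + 1)

/-- Output stream of a Mealy machine with transition `T` and output `O`, from state `s`. -/
def mOut {S M N : Type*} (T : S → M → S) (O : S → M → N) : S → (ℕ → M) → ℕ → N
  | s, σ, 0 => O s (σ 0)
  | s, σ, k + 1 => mOut T O (T s (σ 0)) (fun n => σ (n + 1)) k

/-- Closure of a set of stream functions under functional stream derivatives. The minimal
realization of `!A` has as states the least such set containing `!A`. -/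
def DerivClosed {M N : Type*} (F : Set ((ℕ → M) → (ℕ → N))) : Prop :=
  ∀ h ∈ F, ∀ a : M, sderiv h a ∈ F

section

variable {M N S : Type*} (T : S → M → S) (O : S → M → N)

theorem sderiv_mOut (s : S) (a : M) : sderiv (mOut T O s) a = mOut T O (T s a) :=
  rfl

theorem derivClosed_range_mOut : DerivClosed (Set.range (mOut T O)) := by
  rintro _ ⟨s, rfl⟩ a
  exact ⟨T s a, (sderiv_mOut T O s a).symm⟩

theorem derivative_closure_finite_general (s0 : S) (S' : Set ((ℕ → M) → (ℕ → N)))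
    (hS' : IsLeast {F | mOut T O s0 ∈ F ∧ DerivClosed F} S') : Nonempty (S' ↪ S) := by
  have hsub : S' ⊆ Set.range (mOut T O) :=
    hS'.2 ⟨Set.mem_range_self s0, derivClosed_range_mOut T O⟩
  exact ⟨(Set.embeddingOfSubset _ _ hsub).trans
    ⟨Set.rangeSplitting (mOut T O), Set.rangeSplitting_injective _⟩⟩

end

/-- For a Mealy machine with finite state set `S`, the least set of stream functions
containing the output stream `!A` and closed under functional stream derivatives is finite,
of cardinality at most the cardinality of `S`. -/
theorem derivative_closure_finite {M N S : Type*} [Fintype S]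
    (s0 : S) (T : S → M → S) (O : S → M → N)
    (S' : Set ((ℕ → M) → (ℕ → N)))
    (h0 : mOut T O s0 ∈ S')
    (hcl : ∀ h ∈ S', ∀ a : M, sderiv h a ∈ S')
    (hleast : ∀ S'' : Set ((ℕ → M) → (ℕ → N)),
      mOut T O s0 ∈ S'' → (∀ h ∈ S'', ∀ a : M, sderiv h a ∈ S'') → S' ⊆ S'') :
    S'.Finite ∧ Nat.card ↥S' ≤ Fintype.card S := by
  obtain ⟨e⟩ := derivative_closure_finite_general T O s0 S'
    ⟨⟨h0, hcl⟩, fun F hF => hleast F hF.1 hF.2⟩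
  exact ⟨Finite.of_injective e e.injective,
    (Finite.card_le_of_embedding e).trans_eq Nat.card_eq_fintype_card⟩
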